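/- arXiv:1801.03359 — 2 statements merged into one kernel-verified Lean document; each statement's English description precedes it below -/
import Mathlib

section
/- Assume f satisfies (A1)–(A3) and fix χ > 0. If μ is an f-adapted χ-expanding f-invariant Borel probability measure on M and μ̂ is a lift of μ to M̂, then μ̂(NUE*_χ) = 1. -/
open Real MeasureTheory Filter Topology Metric Set

noncomputable section

namespace OneDim

/-- The interval `M = [0, 1/2]`. -/
def Mset : Set ℝ := Set.Icc 0 (1/2)

/-- Data of a piecewise `C^{1+β}` interval map `f : M → M` with discontinuity set `D`,
constants `β ∈ (0,1)`, `a, K > 1`, radius function `r` and inverse branches `g`. -/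
structure GoodMap where
  f : ℝ → ℝ
  D : Set ℝ
  β : ℝ
  a : ℝ
  K : ℝ
  r : ℝ → ℝ
  g : ℝ → ℝ → ℝ
  hβ0 : 0 < β
  hβ1 : β < 1
  ha : 1 < a
  hK : 1 < K
  hmaps : ∀ x ∈ Mset, f x ∈ Mset
  hD : D ⊆ Mset
  hdiff : DifferentiableOn ℝ f (Mset \ D)

namespace GoodMap

/-- The critical set `C = {x ∈ M \ D : df_x = 0}`. -/
def crit (F : GoodMap) : Set ℝ := {x | x ∈ Mset \ F.D ∧ deriv F.f x = 0}

/-- The singular set `S = C ∪ D`. -/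
def S (F : GoodMap) : Set ℝ := F.crit ∪ F.D

/-- Distance to the singular set. -/
def dS (F : GoodMap) (x : ℝ) : ℝ := Metric.infDist x F.S

/-- Conditions (A1)–(A3). -/
def SatA (F : GoodMap) : Prop :=
  ∀ x ∈ Mset, x ∉ F.S → F.f x ∉ F.S →
    (min (F.dS x ^ F.a) (F.dS (F.f x) ^ F.a) < F.r x ∧ F.r x < 1) ∧
    -- (A1)
    (Set.InjOn F.f (Metric.ball x (2 * F.r x)) ∧
      (∀ y ∈ Metric.ball x (2 * F.r x), DifferentiableAt ℝ F.f y) ∧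
      F.g x (F.f x) = x ∧
      (∀ z ∈ Metric.ball (F.f x) (2 * F.r x), F.f (F.g x z) = z) ∧
      Set.InjOn (F.g x) (Metric.ball (F.f x) (2 * F.r x)) ∧
      (∀ z ∈ Metric.ball (F.f x) (2 * F.r x), DifferentiableAt ℝ (F.g x) z)) ∧
    -- (A2)
    ((∀ y ∈ Metric.ball x (2 * F.r x),
        F.dS x ^ F.a ≤ |deriv F.f y| ∧ |deriv F.f y| ≤ F.dS x ^ (-F.a)) ∧
      (∀ z ∈ Metric.ball (F.f x) (2 * F.r x),
        F.dS x ^ F.a ≤ |deriv (F.g x) z| ∧ |deriv (F.g x) z| ≤ F.dS x ^ (-F.a))) ∧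
    -- (A3)
    ((∀ y ∈ Metric.ball x (2 * F.r x), ∀ z ∈ Metric.ball x (2 * F.r x),
        |deriv F.f y - deriv F.f z| ≤ F.K * |y - z| ^ F.β) ∧
      (∀ y ∈ Metric.ball (F.f x) (2 * F.r x), ∀ z ∈ Metric.ball (F.f x) (2 * F.r x),
        |deriv (F.g x) y - deriv (F.g x) z| ≤ F.K * |y - z| ^ F.β))

end GoodMap

/-- Membership in the natural extension space `M̂`. -/
def inMhat (f : ℝ → ℝ) (x : ℤ → ℝ) : Prop :=
  (∀ n, x n ∈ Mset) ∧ ∀ n : ℤ, f (x (n - 1)) = x n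

/-- The natural extension map `f̂` (left shift). -/
def fhat (x : ℤ → ℝ) : ℤ → ℝ := fun n => x (n + 1)

/-- Iterate `f̂^k` of the natural extension map, `k ∈ ℤ`. -/
def fhatI (k : ℤ) (x : ℤ → ℝ) : ℤ → ℝ := fun n => x (n + k)

/-- The metric `d̂(x̂,ŷ) = sup{2^n d(x_n,y_n) : n ≤ 0}` on `M̂`. -/
def dhat (x y : ℤ → ℝ) : ℝ :=
  sSup {t : ℝ | ∃ n : ℤ, n ≤ 0 ∧ t = (2:ℝ) ^ n * |x n - y n|}

/-- The invertible derivative cocycle `d̂f^{(n)}` over `f̂`. -/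
def dfhat (f : ℝ → ℝ) (x : ℤ → ℝ) (n : ℤ) : ℝ :=
  if 0 ≤ n then ∏ j ∈ Finset.range n.toNat, deriv f (x (j : ℤ))
  else (∏ j ∈ Finset.range (-n).toNat, deriv f (x (-(j : ℤ) - 1)))⁻¹

/-- The Pesin parameter `u(x̂)`. -/
def uPes (f : ℝ → ℝ) (χ : ℝ) (x : ℤ → ℝ) : ℝ :=
  Real.sqrt (∑' n : ℕ, Real.exp (2 * (n:ℝ) * χ) * (dfhat f x (-(n:ℤ))) ^ 2)

/-- The Pesin chart `Ψ_{x̂}(t) = t/u(x̂) + x₀`. -/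
def Psi (f : ℝ → ℝ) (χ : ℝ) (x : ℤ → ℝ) (t : ℝ) : ℝ := t / uPes f χ x + x 0

/-- The set `NUE_χ`. -/
def NUE (F : GoodMap) (χ : ℝ) : Set (ℤ → ℝ) :=
  {x | inMhat F.f x ∧ (∀ n, x n ∉ F.S) ∧
    (∃ l > χ, Tendsto (fun n : ℕ => Real.log |dfhat F.f x (n:ℤ)| / (n:ℝ)) atTop (𝓝 l)) ∧
    (∃ l > χ, Tendsto (fun n : ℕ => Real.log |dfhat F.f x (-(n:ℤ))| / (-(n:ℝ))) atTop (𝓝 l))}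

/-- `ρ(x̂) = d({x₋₁,x₀,x₁}, S)`. -/
def rho (F : GoodMap) (x : ℤ → ℝ) : ℝ :=
  min (F.dS (x (-1))) (min (F.dS (x 0)) (F.dS (x 1)))

/-- `I_ε = {e^{-εn/3} : n ≥ 0}`. -/
def Ieps (ε : ℝ) : Set ℝ := {q | ∃ n : ℕ, q = Real.exp (-(ε * n) / 3)}

/-- `Q̃_ε(x̂)`. -/
def Qtilde (F : GoodMap) (χ ε : ℝ) (x : ℤ → ℝ) : ℝ :=
  ε ^ (3 / F.β) *
    min (uPes F.f χ x ^ (-(24 / F.β)))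
      (uPes F.f χ (fhatI (-1) x) ^ (-(12 / F.β)) * rho F x ^ (72 * F.a / F.β))

/-- `Q_ε(x̂) = max{q ∈ I_ε : q ≤ Q̃_ε(x̂)}`. -/
def Qeps (F : GoodMap) (χ ε : ℝ) (x : ℤ → ℝ) : ℝ :=
  sSup {q | q ∈ Ieps ε ∧ q ≤ Qtilde F χ ε x}

/-- The regular set. -/
def Reg (F : GoodMap) : Set (ℤ → ℝ) :=
  {x | inMhat F.f x ∧ (∀ n, x n ∉ F.S) ∧
    Tendsto (fun n : ℕ => Real.log (F.dS (x (n:ℤ))) / (n:ℝ)) atTop (𝓝 0) ∧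
    Tendsto (fun n : ℕ => Real.log (F.dS (x (-(n:ℤ)))) / (n:ℝ)) atTop (𝓝 0)}

/-- The set `NUE*_χ`. -/
def NUEstar (F : GoodMap) (χ : ℝ) : Set (ℤ → ℝ) :=
  {x | x ∈ NUE F χ ∧ x ∈ Reg F ∧
    (∃ nk : ℕ → ℤ, Tendsto nk atTop atBot ∧
      Tendsto (fun k => uPes F.f χ (fhatI (nk k) x)) atTop (𝓝 (uPes F.f χ x))) ∧
    Tendsto (fun n : ℕ => Real.log (uPes F.f χ (fhatI (-(n:ℤ)) x)) / (-(n:ℝ))) atTop (𝓝 0)}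

/-- An ε-chart is a pair `(x̂, p)`, representing `Ψ_{x̂}` restricted to `[-p,p]`. -/
structure Chart where
  x : ℤ → ℝ
  p : ℝ

/-- `(x̂, p)` is a genuine ε-chart. -/
def IsChart (F : GoodMap) (χ ε : ℝ) (c : Chart) : Prop :=
  c.x ∈ NUE F χ ∧ 0 < c.p ∧ c.p ≤ Qeps F χ ε c.x

/-- ε-overlap of two ε-charts. -/
def Overlap (F : GoodMap) (χ ε : ℝ) (c₁ c₂ : Chart) : Prop :=
  Real.exp (-ε) ≤ c₁.p / c₂.p ∧ c₁.p / c₂.p ≤ Real.exp ε ∧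
  |c₁.x 0 - c₂.x 0| + |(uPes F.f χ c₁.x)⁻¹ - (uPes F.f χ c₂.x)⁻¹| < (c₁.p * c₂.p) ^ 4

/-- `g_{x̂} = g_{x₋₁}`, the inverse branch of `f` taking `x₀` to `x₋₁`. -/
def ghat (F : GoodMap) (x : ℤ → ℝ) : ℝ → ℝ := F.g (x (-1))

/-- `G_{x̂} = Ψ_{f̂⁻¹x̂}⁻¹ ∘ g_{x̂} ∘ Ψ_{x̂}`. -/
def Gmap (F : GoodMap) (χ : ℝ) (x : ℤ → ℝ) (t : ℝ) : ℝ :=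
  uPes F.f χ (fhatI (-1) x) * (ghat F x (Psi F.f χ x t) - x (-1))

/-- `G_{x̂,ŷ} = Ψ_{ŷ}⁻¹ ∘ g_{x̂} ∘ Ψ_{x̂}`. -/
def Gmap2 (F : GoodMap) (χ : ℝ) (x y : ℤ → ℝ) (t : ℝ) : ℝ :=
  uPes F.f χ y * (ghat F x (Psi F.f χ x t) - y 0)

/-- `F_{x̂} = Ψ_{f̂x̂}⁻¹ ∘ f ∘ Ψ_{x̂}`. -/
def Fmap (F : GoodMap) (χ : ℝ) (x : ℤ → ℝ) (t : ℝ) : ℝ :=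
  uPes F.f χ (fhat x) * (F.f (Psi F.f χ x t) - x 1)

/-- `δ_ε = e^{-εn}` where `n` is the unique positive integer with `e^{-εn} < ε ≤ e^{-ε(n-1)}`. -/
def deltaEps (ε : ℝ) : ℝ :=
  Real.exp (-(ε * ((⌊Real.log (1 / ε) / ε⌋ + 1 : ℤ) : ℝ)))

/-- Weak edge `v ⤎ w` (from `w = Ψ_{x̂}^p` to `v = Ψ_{ŷ}^q`). -/
def WeakEdge (F : GoodMap) (χ ε : ℝ) (v w : Chart) : Prop :=
  IsChart F χ ε v ∧ IsChart F χ ε w ∧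
  Overlap F χ ε ⟨fhatI (-1) w.x, v.p⟩ v ∧
  w.p ≤ Real.exp ε * v.p

/-- Edge `v ← w` (from `w = Ψ_{x̂}^p` to `v = Ψ_{ŷ}^q`). -/
def Edge (F : GoodMap) (χ ε : ℝ) (v w : Chart) : Prop :=
  IsChart F χ ε v ∧ IsChart F χ ε w ∧
  Overlap F χ ε ⟨fhatI (-1) w.x, v.p⟩ v ∧
  |v.x 1 - w.x 0| < v.p ∧
  Real.exp (-v.p) ≤ uPes F.f χ (fhat v.x) / uPes F.f χ w.x ∧
  uPes F.f χ (fhat v.x) / uPes F.f χ w.x ≤ Real.exp v.p ∧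
  w.p = min (Real.exp ε * v.p) (deltaEps ε * Qeps F χ ε w.x)

/-- ε-generalized pseudo-orbit. -/
def IsGPO (F : GoodMap) (χ ε : ℝ) (v : ℤ → Chart) : Prop :=
  ∀ n : ℤ, Edge F χ ε (v n) (v (n + 1))

/-- weak ε-generalized pseudo-orbit. -/
def IsWeakGPO (F : GoodMap) (χ ε : ℝ) (v : ℤ → Chart) : Prop :=
  ∀ n : ℤ, WeakEdge F χ ε (v n) (v (n + 1))

/-- The range `Ψ_{x̂}([-p,p])` of an ε-chart. -/
def chartRange (F : GoodMap) (χ : ℝ) (c : Chart) : Set ℝ :=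
  Psi F.f χ c.x '' Set.Icc (-c.p) c.p

/-- A bi-infinite sequence of ε-charts shadows `x̂ ∈ M̂`. -/
def Shadows (F : GoodMap) (χ : ℝ) (v : ℤ → Chart) (x : ℤ → ℝ) : Prop :=
  inMhat F.f x ∧ ∀ n : ℤ, x n ∈ chartRange F χ (v n)

/-- `q_ε(x̂) = δ_ε inf{e^{ε|m|} Q_ε(f̂^m x̂) : m ≤ 0}`. -/
def qeps (F : GoodMap) (χ ε : ℝ) (x : ℤ → ℝ) : ℝ :=
  deltaEps ε *
    sInf {t : ℝ | ∃ m : ℤ, m ≤ 0 ∧ t = Real.exp (ε * |(m:ℝ)|) * Qeps F χ ε (fhatI m x)}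

/-- Recurrence: some symbol repeats infinitely often in the future and some in the past. -/
def Recurrent {V : Type*} (v : ℤ → V) : Prop :=
  (∃ c, {n : ℤ | 0 < n ∧ v n = c}.Infinite) ∧ ∃ c, {n : ℤ | n < 0 ∧ v n = c}.Infinite

/-- The distance `d(v,w) = exp(-min{|n| : v_n ≠ w_n})` on sequence spaces. -/
def dSigma {V : Type*} (v w : ℤ → V) : ℝ :=
  sSup {t : ℝ | ∃ n : ℤ, v n ≠ w n ∧ t = Real.exp (-|(n:ℝ)|)}

/-- Sup norm over a set. -/
def supNorm (h : ℝ → ℝ) (I : Set ℝ) : ℝ := sSup ((fun t => |h t|) '' I)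

/-- Hölder constant over a set. -/
def holConst (γ : ℝ) (h : ℝ → ℝ) (I : Set ℝ) : ℝ :=
  sSup {r : ℝ | ∃ t ∈ I, ∃ s ∈ I, t ≠ s ∧ r = |h t - h s| / |t - s| ^ γ}

/-!
Everything follows from the ergodic theory of the shift on `ℤ → ℝ`. By (A2), the observable
`log |f'(x₀)|` is integrable along with `log d(x₀, S)`. Birkhoff's theorem, applied to the shift
and to its inverse, gives this observable the same averages in the future and in the past, because
both are the conditional expectation on the same σ-algebra of invariant sets. So the backward
exponent `l` exists and equals the forward one, which is `> χ` by hypothesis. Applied to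
`log d(x₀, S)`, Birkhoff's theorem makes the distance to `S` subexponential, and Poincaré
recurrence for the inverse shift makes `u` recur to its own value. Finally, the terms of the series
`u(x̂)²` decay at the exact exponential rate `2 (l - χ) > 0`, and `u(f̂⁻ⁿ x̂)²` is its tail from the
`n`-th term on divided by that term, so it grows subexponentially in `n`.
-/

section MaximalErgodic

variable {Ω : Type*}

section OrderedGroup

variable {G : Type*} [Lattice G] [AddCommGroup G]

lemma partialSups_birkhoffSum_nonneg (T : Ω → Ω) (ψ : Ω → G) (n : ℕ) (x : Ω) :
    0 ≤ partialSups (birkhoffSum T ψ) n x := by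
  simpa using le_partialSups_of_le (birkhoffSum T ψ) n.zero_le x

variable [IsOrderedAddMonoid G]

lemma partialSups_birkhoffSum_succ (T : Ω → Ω) (ψ : Ω → G) (n : ℕ) (x : Ω) :
    partialSups (birkhoffSum T ψ) (n + 1) x =
      0 ⊔ (ψ x + partialSups (birkhoffSum T ψ) n (T x)) := by
  simp only [Pi.partialSups_apply, partialSups_add_one', ← partialSups_const_add,
    Function.comp_def, birkhoffSum_succ', bot_eq_zero, birkhoffSum_zero]

lemma bddAbove_range_birkhoffSum_apply_iff (T : Ω → Ω) (ψ : Ω → G) (x : Ω) :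
    BddAbove (range (birkhoffSum T ψ · (T x))) ↔ BddAbove (range (birkhoffSum T ψ · x)) := by
  rw [← Nat.range_of_succ (birkhoffSum T ψ · x), bddAbove_union,
    ← (OrderIso.addLeft (ψ x)).bddAbove_image, ← range_comp]
  simp [Function.comp_def, birkhoffSum_succ']

end OrderedGroup

variable {T : Ω → Ω} {ψ : Ω → ℝ}

lemma abs_partialSups_birkhoffSum_succ_sub_le (T : Ω → Ω) (ψ : Ω → ℝ) (n : ℕ) (x : Ω) :
    |partialSups (birkhoffSum T ψ) (n + 1) x - partialSups (birkhoffSum T ψ) n (T x)| ≤ |ψ x| := by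
  have hnonneg := partialSups_birkhoffSum_nonneg T ψ n (T x)
  rw [partialSups_birkhoffSum_succ, abs_le]
  rcases max_cases 0 (ψ x + partialSups (birkhoffSum T ψ) n (T x)) with ⟨h, _⟩ | ⟨h, _⟩ <;>
    constructor <;> linarith [neg_abs_le (ψ x), le_abs_self (ψ x)]

lemma eventually_partialSups_birkhoffSum_succ_sub_eq {x : Ω}
    (hx : ¬ BddAbove (range (birkhoffSum T ψ · x))) :
    ∀ᶠ n in atTop,
      partialSups (birkhoffSum T ψ) (n + 1) x - partialSups (birkhoffSum T ψ) n (T x) = ψ x := by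
  have hmono : Monotone fun n ↦ partialSups (birkhoffSum T ψ) n (T x) := fun m n hmn ↦
    (partialSups (birkhoffSum T ψ)).monotone hmn (T x)
  have hunbdd : ¬ BddAbove (range fun n ↦ partialSups (birkhoffSum T ψ) n (T x)) := by
    simpa only [Pi.partialSups_apply, bddAbove_range_partialSups,
      bddAbove_range_birkhoffSum_apply_iff] using hx
  filter_upwards [(tendsto_atTop_atTop_of_monotone' hmono hunbdd).eventually_ge_atTop (-ψ x)]
    with n hn
  rw [partialSups_birkhoffSum_succ, max_eq_right (by linarith), add_sub_cancel_right]

variable [MeasurableSpace Ω] {ν : Measure Ω}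

lemma integrable_partialSups_birkhoffSum (hT : MeasurePreserving T ν ν) (hψ : Integrable ψ ν)
    (n : ℕ) : Integrable (partialSups (birkhoffSum T ψ) n) ν := by
  induction n with
  | zero => simp
  | succ n ih =>
    have hcomp : Integrable (fun x ↦ partialSups (birkhoffSum T ψ) n (T x)) ν :=
      hT.integrable_comp_of_integrable ih
    rw [funext (partialSups_birkhoffSum_succ T ψ n)]
    exact (integrable_zero Ω ℝ ν).sup (hψ.add hcomp)

-- `partialSups (n + 1) - partialSups n ∘ T` converges to `ψ`, dominated by `|ψ|`, and by
-- invariance of `ν` its integral is that of the nonnegative `partialSups (n + 1) - partialSups n`.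
lemma integral_nonneg_of_ae_not_bddAbove_birkhoffSum (hT : MeasurePreserving T ν ν)
    (hψ : Integrable ψ ν) (hunbdd : ∀ᵐ x ∂ν, ¬ BddAbove (range (birkhoffSum T ψ · x))) :
    0 ≤ ∫ x, ψ x ∂ν := by
  have hint := integrable_partialSups_birkhoffSum hT hψ
  have hcomp (n : ℕ) : Integrable (fun x ↦ partialSups (birkhoffSum T ψ) n (T x)) ν :=
    hT.integrable_comp_of_integrable (hint n)
  have hlim : Tendsto (fun n ↦ ∫ x, (partialSups (birkhoffSum T ψ) (n + 1) x -
      partialSups (birkhoffSum T ψ) n (T x)) ∂ν) atTop (𝓝 (∫ x, ψ x ∂ν)) :=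
    tendsto_integral_of_dominated_convergence (fun x ↦ |ψ x|)
      (fun n ↦ ((hint (n + 1)).sub (hcomp n)).aestronglyMeasurable) hψ.abs
      (fun n ↦ .of_forall (abs_partialSups_birkhoffSum_succ_sub_le T ψ n))
      (hunbdd.mono fun x hx ↦ tendsto_nhds_of_eventually_eq
        (eventually_partialSups_birkhoffSum_succ_sub_eq hx))
  refine ge_of_tendsto' hlim fun n ↦ ?_
  have hinv : ∫ x, partialSups (birkhoffSum T ψ) n (T x) ∂ν =
      ∫ x, partialSups (birkhoffSum T ψ) n x ∂ν := by
    rw [← integral_map hT.aemeasurable (hT.map_eq.symm ▸ (hint n).aestronglyMeasurable), hT.map_eq]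
  rw [integral_sub (hint (n + 1)) (hcomp n), hinv, sub_nonneg]
  exact integral_mono (hint n) (hint (n + 1)) ((partialSups (birkhoffSum T ψ)).monotone n.le_succ)

lemma ae_bddAbove_range_birkhoffSum (hT : MeasurePreserving T ν ν) (hψm : Measurable ψ)
    (hψ : Integrable ψ ν) (hneg : ∀ A, MeasurableSet[MeasurableSpace.invariants T] A → ν A ≠ 0 →
      ∫ x in A, ψ x ∂ν < 0) :
    ∀ᵐ x ∂ν, BddAbove (range (birkhoffSum T ψ · x)) := by
  set A := {x | ¬ BddAbove (range (birkhoffSum T ψ · x))} with hA_def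
  have hsum (n : ℕ) : Measurable (birkhoffSum T ψ n) :=
    Finset.measurable_fun_sum _ fun k _ ↦ hψm.comp (hT.measurable.iterate k)
  have hA : MeasurableSet A := (measurableSet_bddAbove_range hsum).compl
  have hTA : T ⁻¹' A = A := by
    ext x
    simp only [hA_def, mem_preimage, mem_ofPred_eq, bddAbove_range_birkhoffSum_apply_iff]
  have hTν : MeasurePreserving T (ν.restrict A) (ν.restrict A) := by
    simpa only [hTA] using hT.restrict_preimage hA
  by_contra hν
  exact (hneg A (MeasurableSpace.measurableSet_invariants.2 ⟨hA, hTA⟩) hν).not_ge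
    (integral_nonneg_of_ae_not_bddAbove_birkhoffSum hTν hψ.integrableOn (ae_restrict_mem hA))

end MaximalErgodic

section Birkhoff

variable {Ω : Type*} [MeasurableSpace Ω] {ν : Measure Ω} {T : Ω → Ω} {φ : Ω → ℝ}

lemma condExp_invariants_comp (ν : Measure Ω) (T : Ω → Ω) (φ : Ω → ℝ) :
    ν[φ | MeasurableSpace.invariants T] ∘ T = ν[φ | MeasurableSpace.invariants T] :=
  MeasurableSpace.comp_eq_of_measurable_invariants stronglyMeasurable_condExp.measurable

lemma ae_eventually_birkhoffAverage_lt [IsFiniteMeasure ν] (hT : MeasurePreserving T ν ν)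
    (hφm : Measurable φ) (hφ : Integrable φ ν) {ε : ℝ} (hε : 0 < ε) :
    ∀ᵐ x ∂ν, ∀ᶠ n : ℕ in atTop,
      birkhoffAverage ℝ T φ n x < (ν[φ | MeasurableSpace.invariants T]) x + ε := by
  set e := ν[φ | MeasurableSpace.invariants T] with he
  have hle := MeasurableSpace.invariants_le T
  have hem : Measurable e := stronglyMeasurable_condExp.measurable.mono hle le_rfl
  have hei : Integrable e ν := integrable_condExp
  set ψ : Ω → ℝ := fun x ↦ φ x - e x - ε / 2 with hψ
  have hneg (A : Set Ω) (hA : MeasurableSet[MeasurableSpace.invariants T] A) (hνA : ν A ≠ 0) :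
      ∫ x in A, ψ x ∂ν < 0 := by
    have hpos : 0 < ν.real A := (measureReal_ne_zero_iff).2 hνA |>.lt_of_le' measureReal_nonneg
    have hsub : Integrable (fun x ↦ φ x - e x) ν := hφ.sub hei
    calc ∫ x in A, ψ x ∂ν = ∫ x in A, φ x ∂ν - ∫ x in A, e x ∂ν - ν.real A * (ε / 2) := by
          rw [integral_sub hsub.integrableOn (integrable_const _),
            integral_sub hφ.integrableOn hei.integrableOn, setIntegral_const, smul_eq_mul]
      _ = -(ν.real A * (ε / 2)) := by rw [he, setIntegral_condExp hle hφ hA, sub_self, zero_sub]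
      _ < 0 := by linarith [mul_pos hpos (half_pos hε)]
  filter_upwards [ae_bddAbove_range_birkhoffSum hT ((hφm.sub hem).sub_const _)
    ((hφ.sub hei).sub (integrable_const _)) hneg] with x ⟨C, hC⟩
  filter_upwards [(tendsto_const_div_atTop_nhds_zero_nat C).eventually_lt_const (half_pos hε),
    eventually_gt_atTop 0] with n hn hn0
  have hn0 : (0 : ℝ) < n := mod_cast hn0
  have hsum : birkhoffSum T φ n x - n * e x - n * (ε / 2) ≤ C := calc
    _ = birkhoffSum T ψ n x := by
      have hesum : birkhoffSum T e n x = n * e x := by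
        simp [birkhoffSum_of_comp_eq (condExp_invariants_comp ν T φ), e]
      simp [← hesum, hψ, birkhoffSum]
    _ ≤ C := hC (mem_range_self n)
  rw [birkhoffAverage, smul_eq_mul, inv_mul_lt_iff₀ hn0]
  rw [div_lt_iff₀ hn0] at hn
  linarith

lemma ae_tendsto_birkhoffAverage_of_measurable [IsFiniteMeasure ν] (hT : MeasurePreserving T ν ν)
    (hφm : Measurable φ) (hφ : Integrable φ ν) :
    ∀ᵐ x ∂ν, Tendsto (birkhoffAverage ℝ T φ · x) atTop
      (𝓝 ((ν[φ | MeasurableSpace.invariants T]) x)) := by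
  have hupper : ∀ᵐ x ∂ν, ∀ k : ℕ, ∀ᶠ n : ℕ in atTop, birkhoffAverage ℝ T φ n x <
      (ν[φ | MeasurableSpace.invariants T]) x + 1 / ((k : ℝ) + 1) :=
    ae_all_iff.2 fun _ ↦ ae_eventually_birkhoffAverage_lt hT hφm hφ (by positivity)
  have hlower : ∀ᵐ x ∂ν, ∀ k : ℕ, ∀ᶠ n : ℕ in atTop, birkhoffAverage ℝ T (-φ) n x <
      (ν[-φ | MeasurableSpace.invariants T]) x + 1 / ((k : ℝ) + 1) :=
    ae_all_iff.2 fun _ ↦ ae_eventually_birkhoffAverage_lt hT hφm.neg hφ.neg (by positivity)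
  filter_upwards [hupper, hlower, condExp_neg φ (MeasurableSpace.invariants T)] with x hu hl hneg
  rw [Metric.tendsto_nhds]
  intro ε hε
  obtain ⟨k, hk⟩ := exists_nat_one_div_lt hε
  filter_upwards [hu k, hl k] with n hun hln
  rw [hneg, birkhoffAverage_neg, Pi.neg_apply, Pi.neg_apply, Pi.neg_apply] at hln
  rw [Real.dist_eq, abs_lt]
  constructor <;> linarith

theorem ae_tendsto_birkhoffAverage [IsFiniteMeasure ν] (hT : MeasurePreserving T ν ν)
    (hφ : Integrable φ ν) :
    ∀ᵐ x ∂ν, Tendsto (birkhoffAverage ℝ T φ · x) atTop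
      (𝓝 ((ν[φ | MeasurableSpace.invariants T]) x)) := by
  have hmk := hφ.aestronglyMeasurable.ae_eq_mk
  filter_upwards [ae_tendsto_birkhoffAverage_of_measurable hT
      hφ.aestronglyMeasurable.stronglyMeasurable_mk.measurable (hφ.congr hmk),
    ae_all_iff.2 (hT.quasiMeasurePreserving.birkhoffAverage_ae_eq_of_ae_eq ℝ hmk),
    condExp_congr_ae (m := MeasurableSpace.invariants T) hmk] with x hlim havg hexp
  simpa only [havg, hexp] using hlim

lemma ae_tendsto_iterate_div [IsFiniteMeasure ν] (hT : MeasurePreserving T ν ν)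
    (hφ : Integrable φ ν) :
    ∀ᵐ x ∂ν, Tendsto (fun n : ℕ ↦ φ (T^[n] x) / n) atTop (𝓝 0) := by
  have hlim := ae_tendsto_birkhoffAverage hT hφ
  filter_upwards [hlim, hT.quasiMeasurePreserving.ae hlim] with x hx hTx
  rw [← Function.comp_apply (f := ν[φ | _]), condExp_invariants_comp] at hTx
  have := (hTx.sub hx).add (tendsto_const_div_atTop_nhds_zero_nat (φ x))
  simp only [sub_self, add_zero] at this
  refine this.congr fun n ↦ ?_
  rw [birkhoffAverage_apply_sub_birkhoffAverage, smul_eq_mul]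
  ring

lemma invariants_symm (e : Equiv.Perm Ω) :
    MeasurableSpace.invariants e.symm = MeasurableSpace.invariants e := by
  ext s
  simp only [MeasurableSpace.measurableSet_invariants, ← e.image_eq_preimage_symm,
    ← e.eq_preimage_iff_image_eq, eq_comm (a := s)]

lemma ae_tendsto_birkhoffAverage_symm [IsFiniteMeasure ν] {e : Ω ≃ᵐ Ω}
    (he : MeasurePreserving e ν ν) (hφ : Integrable φ ν) :
    ∀ᵐ x ∂ν, Tendsto (birkhoffAverage ℝ e.symm φ · (e.symm x)) atTop
      (𝓝 ((ν[φ | MeasurableSpace.invariants e]) x)) := by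
  have hsymm := he.symm e
  filter_upwards [hsymm.quasiMeasurePreserving.ae (ae_tendsto_birkhoffAverage hsymm hφ)] with x hx
  rw [← Function.comp_apply (f := ν[φ | _]), condExp_invariants_comp] at hx
  exact invariants_symm e.toEquiv ▸ hx

lemma ae_exists_strictMono_tendsto_iterate [IsFiniteMeasure ν] {X : Type*} [TopologicalSpace X]
    [SecondCountableTopology X] [MeasurableSpace X] [OpensMeasurableSpace X] {u : Ω → X}
    (hT : MeasurePreserving T ν ν) (hu : Measurable u) :
    ∀ᵐ x ∂ν, ∃ k : ℕ → ℕ, StrictMono k ∧ Tendsto (fun i ↦ u (T^[k i] x)) atTop (𝓝 (u x)) := by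
  -- Poincaré recurrence for the topology on `Ω` induced by `u`.
  let : TopologicalSpace Ω := .induced u inferInstance
  have : SecondCountableTopology Ω := TopologicalSpace.secondCountableTopology_induced Ω X u
  have : OpensMeasurableSpace Ω := ⟨by
    rw [borel_comap]
    exact (MeasurableSpace.comap_mono OpensMeasurableSpace.borel_le).trans hu.comap_le⟩
  filter_upwards [hT.conservative.ae_frequently_mem_of_mem_nhds] with x hx
  obtain ⟨k, hk, hlim⟩ := (mapClusterPt_iff_frequently.2 hx).tendsto_subseq
  exact ⟨k, hk, (continuous_induced_dom.tendsto x).comp hlim⟩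

end Birkhoff

section TemperedSums

lemma log_tsum_exp_mem_Icc {b : ℕ → ℝ} {A r : ℝ} (hr : 0 < r) (hb0 : b 0 = 0)
    (hb : ∀ k : ℕ, b k ≤ A - r * k) :
    log (∑' k, exp (b k)) ∈ Icc 0 (A - log (1 - exp (-r))) := by
  have hr1 : exp (-r) < 1 := by simpa using hr
  have hle (k : ℕ) : exp (b k) ≤ exp A * exp (-r) ^ k := by
    rw [← exp_nat_mul, ← exp_add, exp_le_exp]
    linarith [hb k]
  have hgeom := (hasSum_geometric_of_lt_one (exp_pos _).le hr1).mul_left (exp A)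
  have hsum : Summable fun k ↦ exp (b k) :=
    .of_nonneg_of_le (fun k ↦ (exp_pos _).le) hle hgeom.summable
  have hone : 1 ≤ ∑' k, exp (b k) := by
    simpa [hb0] using hsum.le_tsum 0 fun k _ ↦ (exp_pos _).le
  refine ⟨log_nonneg hone, ?_⟩
  calc log (∑' k, exp (b k)) ≤ log (exp A * (1 - exp (-r))⁻¹) :=
        log_le_log (by linarith) (hasSum_le hle hsum.hasSum hgeom)
    _ = A - log (1 - exp (-r)) := by
      rw [log_mul (exp_pos A).ne' (inv_pos.2 (sub_pos.2 hr1)).ne', log_exp, log_inv,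
        ← sub_eq_add_neg]

variable {C : ℕ → ℝ} {c : ℝ}

lemma eventually_forall_sub_add_le (hC : Tendsto (fun n ↦ C n / n) atTop (𝓝 c)) {δ : ℝ}
    (hδ : 0 < δ) : ∀ᶠ n : ℕ in atTop, ∀ k : ℕ, C n - C (n + k) ≤ 2 * δ * n - (c - δ) * k := by
  have hlinear : ∀ᶠ n : ℕ in atTop, |C n - c * n| ≤ δ * n := by
    filter_upwards [Metric.tendsto_nhds.1 hC δ hδ, eventually_gt_atTop 0] with n hn hn0
    have hn0 : (0 : ℝ) < n := mod_cast hn0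
    rw [Real.dist_eq, div_sub' hn0.ne', abs_div, abs_of_pos hn0, div_lt_iff₀ hn0] at hn
    rw [mul_comm c]
    exact hn.le
  obtain ⟨N, hN⟩ := eventually_atTop.1 hlinear
  filter_upwards [eventually_ge_atTop N] with n hn k
  have hn_le := le_of_abs_le (hN n hn)
  have hnk_ge := neg_le_of_abs_le (hN (n + k) (hn.trans (n.le_add_right k)))
  push_cast at hnk_ge
  linarith

lemma tendsto_log_tsum_exp_sub_div (hc : 0 < c) (hC : Tendsto (fun n ↦ C n / n) atTop (𝓝 c)) :
    Tendsto (fun n : ℕ ↦ log (∑' k, exp (C n - C (n + k))) / n) atTop (𝓝 0) := by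
  rw [Metric.tendsto_nhds]
  intro ε hε
  obtain ⟨δ, hδ, hδ'⟩ := exists_between (lt_min (div_pos hε three_pos) hc)
  obtain ⟨hδε, hδc⟩ := lt_min_iff.1 hδ'
  have hconst := tendsto_const_div_atTop_nhds_zero_nat (-log (1 - exp (-(c - δ))))
  filter_upwards [eventually_forall_sub_add_le hC hδ, hconst.eventually_lt_const hδ,
    eventually_gt_atTop 0] with n hn hconst_lt hn0
  have hn0 : (0 : ℝ) < n := mod_cast hn0
  obtain ⟨hnonneg, hle⟩ := log_tsum_exp_mem_Icc (sub_pos.2 hδc) (by simp) hn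
  rw [div_lt_iff₀ hn0] at hconst_lt
  rw [Real.dist_0_eq_abs, abs_of_nonneg (by positivity), div_lt_iff₀ hn0]
  linarith [mul_lt_mul_of_pos_right hδε hn0]

end TemperedSums

section Cocycle

variable {f : ℝ → ℝ} {x : ℤ → ℝ}

lemma dfhat_natCast (f : ℝ → ℝ) (x : ℤ → ℝ) (n : ℕ) :
    dfhat f x n = ∏ j ∈ Finset.range n, deriv f (x j) := by
  simp [dfhat]

lemma dfhat_neg_natCast (f : ℝ → ℝ) (x : ℤ → ℝ) (n : ℕ) :
    dfhat f x (-n) = (∏ j ∈ Finset.range n, deriv f (x (-j - 1)))⁻¹ := by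
  rcases n.eq_zero_or_pos with rfl | hn
  · simp [dfhat]
  · rw [dfhat, if_neg (by lia), neg_neg, Int.toNat_natCast]

lemma dfhat_neg_natCast_ne_zero (hx : ∀ n, deriv f (x n) ≠ 0) (n : ℕ) : dfhat f x (-n) ≠ 0 := by
  rw [dfhat_neg_natCast]
  exact inv_ne_zero (Finset.prod_ne_zero_iff.2 fun _ _ ↦ hx _)

lemma dfhat_neg_add (f : ℝ → ℝ) (x : ℤ → ℝ) (n k : ℕ) :
    dfhat f x (-(n + k : ℕ)) = dfhat f x (-n) * dfhat f (fhatI (-n) x) (-k) := by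
  simp only [dfhat_neg_natCast, Finset.prod_range_add, mul_inv, fhatI]
  congr! 5
  push_cast
  ring

/-- Minus the logarithm of the `n`-th term of the series `∑ e^{2nχ} |d̂f^{(-n)}_{x̂}|²` defining
`u(x̂)²`; it linearises the cocycle, as the terms of `u(f̂^{-n} x̂)²` are quotients of those of
`u(x̂)²`. -/
def logWeight (f : ℝ → ℝ) (χ : ℝ) (x : ℤ → ℝ) (n : ℕ) : ℝ :=
  -2 * (log |dfhat f x (-n)| + n * χ)

lemma uPes_fhatI_neg (χ : ℝ) (hx : ∀ n, deriv f (x n) ≠ 0) (n : ℕ) :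
    uPes f χ (fhatI (-n) x) = √(∑' k, exp (logWeight f χ x n - logWeight f χ x (n + k))) := by
  rw [uPes]
  congr! 3 with k
  have hn := dfhat_neg_natCast_ne_zero hx n
  have hk : dfhat f (fhatI (-n) x) (-k) ≠ 0 := dfhat_neg_natCast_ne_zero (fun _ ↦ hx _) k
  calc exp (2 * k * χ) * dfhat f (fhatI (-n) x) (-k) ^ 2
      = exp (2 * k * χ) * exp (log (dfhat f (fhatI (-n) x) (-k) ^ 2)) := by
        rw [exp_log (by positivity)]
    _ = exp (logWeight f χ x n - logWeight f χ x (n + k)) := by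
        rw [← exp_add, logWeight, logWeight, dfhat_neg_add, log_abs, log_abs, log_mul hn hk,
          log_pow]
        push_cast
        ring_nf

lemma tendsto_log_uPes_fhatI_neg_div {χ l : ℝ} (hx : ∀ n, deriv f (x n) ≠ 0) (hl : χ < l)
    (hlim : Tendsto (fun n : ℕ ↦ log |dfhat f x (-n)| / -(n : ℝ)) atTop (𝓝 l)) :
    Tendsto (fun n : ℕ ↦ log (uPes f χ (fhatI (-n) x)) / -(n : ℝ)) atTop (𝓝 0) := by
  have hweight : Tendsto (fun n ↦ logWeight f χ x n / n) atTop (𝓝 (2 * (l - χ))) := by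
    refine ((hlim.sub_const χ).const_mul 2).congr' ?_
    filter_upwards [eventually_ne_atTop 0] with n hn
    rw [logWeight]
    field
  have htsum := tendsto_log_tsum_exp_sub_div (by linarith) hweight
  rw [← mul_zero (-(1 / 2) : ℝ)]
  refine (htsum.const_mul _).congr fun n ↦ ?_
  rw [uPes_fhatI_neg χ hx, log_sqrt (tsum_nonneg fun k ↦ (exp_pos _).le)]
  ring

lemma measurable_uPes (f : ℝ → ℝ) (χ : ℝ) : Measurable (uPes f χ) := by
  have hdfhat (n : ℕ) : Measurable fun x ↦ dfhat f x (-n) := by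
    simp only [dfhat_neg_natCast]
    exact (Finset.measurable_fun_prod _ fun j _ ↦
      (measurable_deriv f).comp (measurable_pi_apply _)).inv
  exact (Measurable.tsum fun n ↦ ((hdfhat n).pow_const 2).const_mul _).sqrt

end Cocycle

section Shift

lemma fhatI_iterate (k : ℤ) (n : ℕ) : (fhatI k)^[n] = fhatI (n * k) := by
  induction n with
  | zero => funext x m; simp [fhatI]
  | succ n ih =>
    funext x m
    simp only [Function.iterate_succ_apply', ih, fhatI]
    push_cast
    ring_nf

/-- The map `f̂` as a measurable automorphism of the space `ℤ → ℝ` of all bi-infinite sequences,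
which makes its inverse available to ergodic theory without restricting to `M̂`. -/
def shift : (ℤ → ℝ) ≃ᵐ (ℤ → ℝ) where
  toFun := fhat
  invFun := fhatI (-1)
  left_inv x := funext fun n ↦ by simp [fhat, fhatI]
  right_inv x := funext fun n ↦ by simp [fhat, fhatI]
  measurable_toFun := measurable_pi_lambda _ fun n ↦ measurable_pi_apply (n + 1)
  measurable_invFun := measurable_pi_lambda _ fun n ↦ measurable_pi_apply (n + -1)

lemma shift_iterate (n : ℕ) : shift^[n] = fhatI n :=
  (fhatI_iterate 1 n).trans (by rw [mul_one])

lemma shift_symm_iterate (n : ℕ) : shift.symm^[n] = fhatI (-n) :=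
  (fhatI_iterate (-1) n).trans (by rw [mul_neg_one])

/-- The observable `x̂ ↦ log |f'(x₀)|`, whose Birkhoff averages along `f̂` and `f̂⁻¹` are the
forward and backward finite-time Lyapunov exponents. -/
def logExpansion (f : ℝ → ℝ) (x : ℤ → ℝ) : ℝ := log |deriv f (x 0)|

variable {f : ℝ → ℝ} {x : ℤ → ℝ}

lemma log_abs_dfhat_natCast (hx : ∀ n, deriv f (x n) ≠ 0) (n : ℕ) :
    log |dfhat f x n| = birkhoffSum shift (logExpansion f) n x := by
  rw [dfhat_natCast, Finset.abs_prod, log_prod fun j _ ↦ abs_ne_zero.2 (hx _)]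
  simp [birkhoffSum, shift_iterate, logExpansion, fhatI]

lemma log_abs_dfhat_neg_natCast (hx : ∀ n, deriv f (x n) ≠ 0) (n : ℕ) :
    log |dfhat f x (-n)| = -birkhoffSum shift.symm (logExpansion f) n (shift.symm x) := by
  rw [dfhat_neg_natCast, abs_inv, log_inv, Finset.abs_prod,
    log_prod fun j _ ↦ abs_ne_zero.2 (hx _)]
  simp only [birkhoffSum, ← Function.iterate_succ_apply, shift_symm_iterate, logExpansion, fhatI]
  congr! 6
  push_cast
  ring

variable {μhat : Measure (ℤ → ℝ)}

lemma measurePreserving_fhatI (hT : MeasurePreserving shift μhat μhat) :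
    ∀ n : ℤ, MeasurePreserving (fhatI n) μhat μhat
  | (n : ℕ) => shift_iterate n ▸ hT.iterate n
  | .negSucc n => by
    rw [Int.negSucc_eq, ← Nat.cast_succ, ← shift_symm_iterate]
    exact (hT.symm shift).iterate _

lemma ae_tendsto_apply_div [IsFiniteMeasure μhat] (hT : MeasurePreserving shift μhat μhat)
    {ψ : ℝ → ℝ} (hψ : Integrable (fun x ↦ ψ (x 0)) μhat) :
    ∀ᵐ x ∂μhat, Tendsto (fun n : ℕ ↦ ψ (x n) / n) atTop (𝓝 0) ∧
      Tendsto (fun n : ℕ ↦ ψ (x (-n)) / n) atTop (𝓝 0) := by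
  filter_upwards [ae_tendsto_iterate_div hT hψ, ae_tendsto_iterate_div (hT.symm shift) hψ]
    with x hfwd hbwd
  simp only [shift_iterate, shift_symm_iterate, fhatI, zero_add] at hfwd hbwd
  exact ⟨hfwd, hbwd⟩

lemma ae_tendsto_log_abs_dfhat_neg [IsFiniteMeasure μhat] (hT : MeasurePreserving shift μhat μhat)
    (hint : Integrable (logExpansion f) μhat) (hderiv : ∀ᵐ x ∂μhat, ∀ n, deriv f (x n) ≠ 0) :
    ∀ᵐ x ∂μhat, ∀ l, Tendsto (fun n : ℕ ↦ log |dfhat f x n| / n) atTop (𝓝 l) →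
      Tendsto (fun n : ℕ ↦ log |dfhat f x (-n)| / -(n : ℝ)) atTop (𝓝 l) := by
  filter_upwards [ae_tendsto_birkhoffAverage hT hint, ae_tendsto_birkhoffAverage_symm hT hint,
    hderiv] with x hfwd hbwd hx l hl
  simp only [birkhoffAverage, smul_eq_mul, inv_mul_eq_div] at hfwd hbwd
  simp only [log_abs_dfhat_natCast hx] at hl
  simp only [log_abs_dfhat_neg_natCast hx, neg_div_neg_eq]
  exact tendsto_nhds_unique hfwd hl ▸ hbwd

lemma ae_exists_tendsto_atBot_uPes [IsFiniteMeasure μhat]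
    (hT : MeasurePreserving shift μhat μhat) (f : ℝ → ℝ) (χ : ℝ) :
    ∀ᵐ x ∂μhat, ∃ nk : ℕ → ℤ, Tendsto nk atTop atBot ∧
      Tendsto (fun k ↦ uPes f χ (fhatI (nk k) x)) atTop (𝓝 (uPes f χ x)) := by
  filter_upwards [ae_exists_strictMono_tendsto_iterate (hT.symm shift) (measurable_uPes f χ)]
    with x ⟨k, hk, hlim⟩
  simp only [shift_symm_iterate] at hlim
  exact ⟨fun i ↦ -k i,
    tendsto_neg_atTop_atBot.comp (tendsto_natCast_atTop_atTop.comp hk.tendsto_atTop), hlim⟩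

variable {μ : Measure ℝ}

lemma ae_forall_apply (hT : MeasurePreserving shift μhat μhat)
    (hproj : MeasurePreserving (fun x : ℤ → ℝ ↦ x 0) μhat μ) {P : ℝ → Prop}
    (hP : ∀ᵐ y ∂μ, P y) : ∀ᵐ x ∂μhat, ∀ n, P (x n) := by
  refine ae_all_iff.2 fun n ↦ ?_
  simpa [fhatI] using (hproj.comp (measurePreserving_fhatI hT n)).quasiMeasurePreserving.ae hP

lemma ae_inMhat [IsProbabilityMeasure μhat] (hT : MeasurePreserving shift μhat μhat)
    (hproj : MeasurePreserving (fun x : ℤ → ℝ ↦ x 0) μhat μ) (hf : AEMeasurable f μ)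
    (hsupp : μhat {x | inMhat f x} = 1) : ∀ᵐ x ∂μhat, inMhat f x := by
  have happly (n : ℤ) : AEMeasurable (fun x : ℤ → ℝ ↦ f (x n)) μhat := by
    simpa [Function.comp_def, fhatI] using
      hf.comp_quasiMeasurePreserving
        (hproj.comp (measurePreserving_fhatI hT n)).quasiMeasurePreserving
  have hmeas : NullMeasurableSet {x : ℤ → ℝ | inMhat f x} μhat := by
    simp only [inMhat, ofPred_and, ofPred_forall]
    exact .inter (.iInter fun n ↦ (measurable_pi_apply n measurableSet_Icc).nullMeasurableSet)
      (.iInter fun n ↦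
        nullMeasurableSet_eq_fun (happly (n - 1)) (measurable_pi_apply n).aemeasurable)
  exact (mem_ae_iff_prob_eq_one₀ hmeas).2 hsupp

lemma inMhat.iterate_apply_zero (hx : inMhat f x) (n : ℕ) : f^[n] (x 0) = x n := by
  induction n with
  | zero => rfl
  | succ n ih =>
    rw [Function.iterate_succ_apply', ih]
    simpa using hx.2 (n + 1)

end Shift

section NonuniformExpansion

variable {F : GoodMap} {x : ℝ}

namespace GoodMap

lemma notMem_S_of_dS_pos (hx : 0 < F.dS x) : x ∉ F.S := fun hxS ↦
  hx.ne' (infDist_zero_of_mem hxS)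

lemma deriv_ne_zero (hx : x ∈ Mset) (hxS : x ∉ F.S) : deriv F.f x ≠ 0 := fun h ↦
  hxS (.inl ⟨⟨hx, fun hxD ↦ hxS (.inr hxD)⟩, h⟩)

lemma SatA.abs_deriv_mem_Icc (hA : F.SatA) (hx : x ∈ Mset) (hxS : x ∉ F.S) (hfx : F.f x ∉ F.S) :
    |deriv F.f x| ∈ Icc (F.dS x ^ F.a) (F.dS x ^ (-F.a)) := by
  obtain ⟨⟨hr, -⟩, -, ⟨hderiv, -⟩, -⟩ := hA x hx hxS hfx
  have hr0 : 0 < F.r x :=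
    (le_min (rpow_nonneg infDist_nonneg _) (rpow_nonneg infDist_nonneg _)).trans_lt hr
  exact hderiv x (mem_ball_self (by positivity))

-- If `d(x, S)` were zero, then so would be `d(x, S) ^ (-a)`, which bounds `|f'(x)| ≠ 0`.
lemma SatA.dS_pos (hA : F.SatA) (hx : x ∈ Mset) (hxS : x ∉ F.S) (hfx : F.f x ∉ F.S) :
    0 < F.dS x := by
  refine infDist_nonneg.lt_of_ne' fun h ↦ deriv_ne_zero hx hxS (abs_nonpos_iff.1 ?_)
  simpa only [dS, h, zero_rpow (neg_ne_zero.2 (one_pos.trans F.ha).ne')]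
    using (hA.abs_deriv_mem_Icc hx hxS hfx).2

lemma SatA.abs_log_abs_deriv_le (hA : F.SatA) (hx : x ∈ Mset) (hxS : x ∉ F.S)
    (hfx : F.f x ∉ F.S) : |log (|deriv F.f x|)| ≤ |F.a * log (F.dS x)| := by
  have hd := hA.dS_pos hx hxS hfx
  obtain ⟨hlo, hup⟩ := hA.abs_deriv_mem_Icc hx hxS hfx
  have hlo' := log_le_log (by positivity) hlo
  have hup' := log_le_log (abs_pos.2 (deriv_ne_zero hx hxS)) hup
  rw [log_rpow hd] at hlo' hup'
  exact abs_le.2 ⟨by linarith [neg_abs_le (F.a * log (F.dS x))],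
    by linarith [neg_le_abs (F.a * log (F.dS x))]⟩

variable {μ : Measure ℝ}

lemma SatA.integrable_log_abs_deriv (hA : F.SatA)
    (hgood : ∀ᵐ x ∂μ, x ∈ Mset ∧ x ∉ F.S ∧ F.f x ∉ F.S)
    (hint : Integrable (fun x ↦ log (F.dS x)) μ) :
    Integrable (fun x ↦ log |deriv F.f x|) μ :=
  (hint.const_mul F.a).mono
    (measurable_log.comp (measurable_deriv F.f).abs).aestronglyMeasurable
    (hgood.mono fun _ hx ↦ hA.abs_log_abs_deriv_le hx.1 hx.2.1 hx.2.2)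

end GoodMap

variable {χ : ℝ} {μ : Measure ℝ} {μhat : Measure (ℤ → ℝ)} [IsFiniteMeasure μhat]

lemma ae_mem_NUE (hT : MeasurePreserving shift μhat μhat)
    (hproj : MeasurePreserving (fun x : ℤ → ℝ ↦ x 0) μhat μ)
    (hMhat : ∀ᵐ x ∂μhat, inMhat F.f x) (hS : ∀ᵐ x ∂μ, x ∉ F.S)
    (hint : Integrable (fun x ↦ log |deriv F.f x|) μ)
    (hexp : ∀ᵐ x ∂μ, ∃ l > χ, Tendsto
      (fun n : ℕ ↦ log |∏ j ∈ Finset.range n, deriv F.f (F.f^[j] x)| / n) atTop (𝓝 l)) :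
    ∀ᵐ x ∂μhat, x ∈ NUE F χ := by
  have hSn : ∀ᵐ x ∂μhat, ∀ n, x n ∉ F.S := ae_forall_apply hT hproj hS
  have hderiv : ∀ᵐ x ∂μhat, ∀ n, deriv F.f (x n) ≠ 0 := by
    filter_upwards [hMhat, hSn] with x hx hxS n
    exact GoodMap.deriv_ne_zero (hx.1 n) (hxS n)
  have hint' : Integrable (logExpansion F.f) μhat := hproj.integrable_comp_of_integrable hint
  filter_upwards [hMhat, hSn, hproj.quasiMeasurePreserving.ae hexp,
    ae_tendsto_log_abs_dfhat_neg hT hint' hderiv] with x hx hxS ⟨l, hl, hfwd⟩ hbwd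
  simp only [hx.iterate_apply_zero, ← dfhat_natCast] at hfwd
  exact ⟨hx, hxS, ⟨l, hl, hfwd⟩, l, hl, hbwd l hfwd⟩

lemma ae_mem_Reg (hT : MeasurePreserving shift μhat μhat)
    (hproj : MeasurePreserving (fun x : ℤ → ℝ ↦ x 0) μhat μ)
    (hMhat : ∀ᵐ x ∂μhat, inMhat F.f x) (hS : ∀ᵐ x ∂μ, x ∉ F.S)
    (hint : Integrable (fun x ↦ log (F.dS x)) μ) : ∀ᵐ x ∂μhat, x ∈ Reg F := by
  filter_upwards [hMhat, ae_forall_apply hT hproj hS,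
    ae_tendsto_apply_div hT (hproj.integrable_comp_of_integrable hint)] with x hx hxS hlim
  exact ⟨hx, hxS, hlim⟩

lemma tendsto_log_uPes_of_mem_NUE {x : ℤ → ℝ} (hx : x ∈ NUE F χ) :
    Tendsto (fun n : ℕ ↦ log (uPes F.f χ (fhatI (-n) x)) / -(n : ℝ)) atTop (𝓝 0) :=
  let ⟨hMhat, hS, _, _, hl, hlim⟩ := hx
  tendsto_log_uPes_fhatI_neg_div (fun n ↦ GoodMap.deriv_ne_zero (hMhat.1 n) (hS n)) hl hlim

end NonuniformExpansion

theorem lift_full_measure_NUEstar_general (F : GoodMap) (χ : ℝ) (μ : Measure ℝ)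
    (hf : AEMeasurable F.f μ) (hS : ∀ᵐ x ∂μ, 0 < F.dS x)
    (hint : Integrable (fun x ↦ log (F.dS x)) μ)
    (hderiv : Integrable (fun x ↦ log |deriv F.f x|) μ)
    (hexp : ∀ᵐ x ∂μ, ∃ l > χ, Tendsto
      (fun n : ℕ ↦ log |∏ j ∈ Finset.range n, deriv F.f (F.f^[j] x)| / (n : ℝ)) atTop (𝓝 l))
    (μhat : Measure (ℤ → ℝ)) [IsProbabilityMeasure μhat] (hsupp : μhat {x | inMhat F.f x} = 1)
    (hinv : μhat.map fhat = μhat) (hproj : μhat.map (fun x ↦ x 0) = μ) :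
    μhat (NUEstar F χ) = 1 := by
  have hT : MeasurePreserving shift μhat μhat := ⟨shift.measurable, hinv⟩
  have hπ : MeasurePreserving (fun x : ℤ → ℝ ↦ x 0) μhat μ := ⟨measurable_pi_apply 0, hproj⟩
  have hMhat := ae_inMhat hT hπ hf hsupp
  have hS' : ∀ᵐ x ∂μ, x ∉ F.S := hS.mono fun _ ↦ GoodMap.notMem_S_of_dS_pos
  have hfull : ∀ᵐ x ∂μhat, x ∈ NUEstar F χ := by
    filter_upwards [ae_mem_NUE hT hπ hMhat hS' hderiv hexp, ae_mem_Reg hT hπ hMhat hS' hint,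
      ae_exists_tendsto_atBot_uPes hT F.f χ] with x hNUE hReg hrec
    exact ⟨hNUE, hReg, hrec, tendsto_log_uPes_of_mem_NUE hNUE⟩
  exact (measure_congr (eventuallyEq_univ.2 hfull)).trans measure_univ

/-- if `μ̂` is the lift of an f-adapted χ-expanding measure, then
`μ̂(NUE*_χ) = 1` (Lemma 2.2). -/
theorem lift_full_measure_NUEstar (F : GoodMap) (hA : F.SatA) (χ : ℝ) (hχ : 0 < χ)
    (μ : Measure ℝ) (hprob : IsProbabilityMeasure μ) (hM : μ Mset = 1)
    (hinv : μ.map F.f = μ)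
    (hS : μ F.S = 0) (hint : Integrable (fun x => Real.log (F.dS x)) μ)
    (hexp : ∀ᵐ x ∂μ, (∀ n : ℕ, F.f^[n] x ∉ F.S) ∧
      ∃ l > χ, Tendsto
        (fun n : ℕ => Real.log |∏ j ∈ Finset.range n, deriv F.f (F.f^[j] x)| / (n:ℝ))
        atTop (𝓝 l))
    (μhat : Measure (ℤ → ℝ)) (hprob2 : IsProbabilityMeasure μhat)
    (hsupp : μhat {x | inMhat F.f x} = 1)
    (hinv2 : μhat.map fhat = μhat)
    (hproj : μhat.map (fun x => x 0) = μ) :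
    μhat (NUEstar F χ) = 1 := by
  have hf : AEMeasurable F.f μ :=
    AEMeasurable.of_map_ne_zero (hinv.symm ▸ IsProbabilityMeasure.ne_zero μ)
  have hgood : ∀ᵐ x ∂μ, x ∈ Mset ∧ x ∉ F.S ∧ F.f x ∉ F.S :=
    Eventually.and ((mem_ae_iff_prob_eq_one measurableSet_Icc).2 hM)
      (hexp.mono fun _ hx ↦ ⟨hx.1 0, hx.1 1⟩)
  exact lift_full_measure_NUEstar_general F χ μ hf
    (hgood.mono fun _ hx ↦ hA.dS_pos hx.1 hx.2.1 hx.2.2) hint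
    (hA.integrable_log_abs_deriv hgood hint) (hexp.mono fun _ hx ↦ hx.2) μhat hsupp hinv2 hproj

end OneDim
end
end

section
/- Assume f satisfies (A1)–(A3) and fix χ > 0. There is ε₀ > 0 such that for all 0 < ε < ε₀: if Ψ_{x̂₁}^{p₁} and Ψ_{x̂₂}^{p₂} are ε-charts that ε-overlap, then: (1) e^{−(p₁p₂)³} ≤ u(x̂₁)/u(x̂₂) ≤ e^{(p₁p₂)³}; (2) Ψ_{x̂ᵢ}([−e^{−2ε}pᵢ, e^{−2ε}pᵢ]) ⊂ Ψ_{x̂ⱼ}([−pⱼ, pⱼ]) for all i, j ∈ {1,2}; (3) for all i, j ∈ {1,2}, the affine map φ := Ψ_{x̂ᵢ}^{−1} ∘ Ψ_{x̂ⱼ} satisfies sup_{t∈[−1,1]} |φ(t) − t| + sup_{t∈[−1,1]} |φ'(t) − 1| < ε(p₁p₂)³. -/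
open Real MeasureTheory Filter Topology Metric Set

noncomputable section

namespace OneDim

/-!
The change of coordinates `φ = Ψ_x⁻¹ ∘ Ψ_y` is affine, and
`φ(t) - t = u(x) * ((y₀ - x₀) + (u(y)⁻¹ - u(x)⁻¹) * t)`. On `[-1, 1]` both `φ(t) - t` and
`φ' - 1` are thus at most `u(x) * (p₁ p₂) ^ 4` for overlapping charts. The definition of `Q_ε`
makes `u(x) * p₁ ≤ ε ^ 3`, so one factor `p₁ p₂` absorbs `u(x)`.
-/

section

variable {F : GoodMap} {f : ℝ → ℝ} {χ ε : ℝ} {x y : ℤ → ℝ} {c c₁ c₂ : Chart}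

theorem supNorm_le {h : ℝ → ℝ} {I : Set ℝ} {C : ℝ} (hC : 0 ≤ C) (hI : ∀ t ∈ I, |h t| ≤ C) :
    supNorm h I ≤ C :=
  Real.sSup_le (forall_mem_image.2 hI) hC

theorem summable_exp_mul_sq_of_tendsto_log {a : ℕ → ℝ} {l : ℝ} (hl : χ < l)
    (ha : Tendsto (fun n : ℕ => log |a n| / (-(n : ℝ))) atTop (𝓝 l)) :
    Summable fun n : ℕ => exp (2 * (n : ℝ) * χ) * a n ^ 2 := by
  obtain ⟨m, hχm, hml⟩ := exists_between hl
  have hgeom : Summable fun n : ℕ => exp (2 * (χ - m)) ^ n :=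
    summable_geometric_of_lt_one (exp_pos _).le (exp_lt_one_iff.2 (by linarith))
  refine hgeom.of_norm_bounded_eventually_nat ?_
  filter_upwards [ha.eventually (lt_mem_nhds hml), eventually_gt_atTop 0] with n hn hn0
  have hlog : log |a n| ≤ -(n * m) := by
    have hn0' : -(n : ℝ) < 0 := by simpa using hn0
    linarith [(lt_div_iff_of_neg hn0').1 hn]
  have habs : |a n| ≤ exp (-(n * m)) := (le_exp_log _).trans (exp_le_exp.2 hlog)
  calc ‖exp (2 * (n : ℝ) * χ) * a n ^ 2‖ = exp (2 * (n : ℝ) * χ) * |a n| ^ 2 := by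
        rw [sq_abs, norm_of_nonneg (by positivity)]
    _ ≤ exp (2 * (n : ℝ) * χ) * exp (-(n * m)) ^ 2 := by gcongr
    _ = exp (2 * (χ - m)) ^ n := by
        rw [← exp_nat_mul, ← exp_nat_mul, ← exp_add]
        push_cast
        ring_nf

theorem one_le_uPes (hx : x ∈ NUE F χ) : 1 ≤ uPes F.f χ x := by
  obtain ⟨-, -, -, l, hl, hlim⟩ := hx
  have hsum := summable_exp_mul_sq_of_tendsto_log hl hlim
  rw [uPes, one_le_sqrt]
  simpa [dfhat] using hsum.le_tsum 0 fun _ _ => by positivity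

theorem Qeps_le (hε : 0 ≤ ε) :
    Qeps F χ ε x ≤ ε ^ (3 / F.β) * uPes F.f χ x ^ (-(24 / F.β)) := by
  have hu : 0 ≤ uPes F.f χ x := sqrt_nonneg _
  refine Real.sSup_le (fun q hq => hq.2.trans ?_) (by positivity)
  exact mul_le_mul_of_nonneg_left (min_le_left _ _) (by positivity)

/-- The change of coordinates `Ψ_x⁻¹ ∘ Ψ_y` between Pesin charts, as an affine map of `ℝ`. -/
def transition (f : ℝ → ℝ) (χ : ℝ) (x y : ℤ → ℝ) (t : ℝ) : ℝ :=
  uPes f χ x * (Psi f χ y t - x 0)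

/-- The distance between the coefficients of the affine maps `Ψ_x` and `Ψ_y`; it is the quantity
that an overlap of charts bounds. -/
def chartDist (f : ℝ → ℝ) (χ : ℝ) (x y : ℤ → ℝ) : ℝ :=
  |x 0 - y 0| + |(uPes f χ x)⁻¹ - (uPes f χ y)⁻¹|

theorem chartDist_self : chartDist f χ x x = 0 := by simp [chartDist]

theorem chartDist_comm : chartDist f χ x y = chartDist f χ y x := by
  rw [chartDist, chartDist, abs_sub_comm (x 0), abs_sub_comm (uPes f χ x)⁻¹]

theorem chartDist_nonneg : 0 ≤ chartDist f χ x y := by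
  rw [chartDist]
  positivity

theorem Psi_transition (hu : uPes f χ x ≠ 0) (t : ℝ) :
    Psi f χ x (transition f χ x y t) = Psi f χ y t := by
  rw [Psi, transition, mul_div_cancel_left₀ _ hu, sub_add_cancel]

theorem abs_transition_sub_self_le (hu : 0 < uPes f χ x) {t : ℝ} (ht : |t| ≤ 1) :
    |transition f χ x y t - t| ≤ uPes f χ x * chartDist f χ x y := by
  have hφ : transition f χ x y t - t =
      uPes f χ x * ((y 0 - x 0) + ((uPes f χ y)⁻¹ - (uPes f χ x)⁻¹) * t) := by
    rw [transition, Psi]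
    linear_combination t * mul_inv_cancel₀ hu.ne'
  rw [hφ, abs_mul, abs_of_pos hu, chartDist_comm]
  gcongr
  refine (abs_add_le _ _).trans ?_
  rw [abs_mul]
  exact add_le_add_right (mul_le_of_le_one_right (abs_nonneg _) ht) _

theorem hasDerivAt_transition (t : ℝ) :
    HasDerivAt (transition f χ x y) (uPes f χ x / uPes f χ y) t := by
  rw [← mul_one_div]
  exact ((((hasDerivAt_id t).div_const _).add_const _).sub_const _).const_mul _

theorem abs_uPes_div_sub_one_le (hu : 0 < uPes f χ x) :
    |uPes f χ x / uPes f χ y - 1| ≤ uPes f χ x * chartDist f χ x y := by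
  have hdiff : uPes f χ x / uPes f χ y - 1 =
      -(uPes f χ x * ((uPes f χ x)⁻¹ - (uPes f χ y)⁻¹)) := by
    rw [mul_sub, mul_inv_cancel₀ hu.ne', neg_sub, div_eq_mul_inv]
  rw [hdiff, abs_neg, abs_mul, abs_of_pos hu]
  gcongr
  exact le_add_of_nonneg_left (abs_nonneg _)

theorem supNorm_transition_add_supNorm_deriv_le (hu : 0 < uPes f χ x) :
    supNorm (fun t => transition f χ x y t - t) (Icc (-1) 1) +
        supNorm (fun t => deriv (transition f χ x y) t - 1) (Icc (-1) 1) ≤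
      2 * (uPes f χ x * chartDist f χ x y) := by
  have hnonneg : 0 ≤ uPes f χ x * chartDist f χ x y := mul_nonneg hu.le chartDist_nonneg
  rw [two_mul]
  refine add_le_add (supNorm_le hnonneg fun t ht => ?_) (supNorm_le hnonneg fun t _ => ?_)
  · exact abs_transition_sub_self_le hu (abs_le.2 ht)
  · rw [(hasDerivAt_transition t).deriv]
    exact abs_uPes_div_sub_one_le hu

theorem image_Psi_subset (hu : 0 < uPes f χ x) {r s : ℝ} (hr : r ≤ 1)
    (hrs : r + uPes f χ x * chartDist f χ x y ≤ s) :
    Psi f χ y '' Icc (-r) r ⊆ Psi f χ x '' Icc (-s) s := by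
  rintro _ ⟨t, ht, rfl⟩
  have htr : |t| ≤ r := abs_le.2 ht
  refine ⟨transition f χ x y t, abs_le.1 ?_, Psi_transition hu.ne' t⟩
  calc |transition f χ x y t| ≤ |t| + |transition f χ x y t - t| := by
        linarith [abs_sub_abs_le_abs_sub (transition f χ x y t) t]
    _ ≤ r + uPes f χ x * chartDist f χ x y :=
        add_le_add htr (abs_transition_sub_self_le hu (htr.trans hr))
    _ ≤ s := hrs

namespace IsChart

theorem one_le_uPes (hc : IsChart F χ ε c) : 1 ≤ uPes F.f χ c.x :=
  OneDim.one_le_uPes hc.1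

theorem uPes_pos (hc : IsChart F χ ε c) : 0 < uPes F.f χ c.x :=
  one_pos.trans_le hc.one_le_uPes

theorem uPes_mul_le (hε : 0 < ε) (hε' : ε ≤ 1) (hc : IsChart F χ ε c) :
    uPes F.f χ c.x * c.p ≤ ε ^ 3 := by
  have hu := hc.uPes_pos
  have hε3 : ε ^ (3 / F.β) ≤ ε ^ 3 := by
    rw [← rpow_natCast]
    exact rpow_le_rpow_of_exponent_ge hε hε' (le_div_self (by norm_num) F.hβ0 F.hβ1.le)
  have hu24 : uPes F.f χ c.x ^ (-(24 / F.β)) ≤ (uPes F.f χ c.x)⁻¹ := by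
    rw [← rpow_neg_one]
    refine rpow_le_rpow_of_exponent_le hc.one_le_uPes (neg_le_neg ?_)
    rw [one_le_div F.hβ0]
    linarith [F.hβ1]
  calc uPes F.f χ c.x * c.p
      ≤ uPes F.f χ c.x * (ε ^ (3 / F.β) * uPes F.f χ c.x ^ (-(24 / F.β))) := by
        gcongr
        exact hc.2.2.trans (Qeps_le hε.le)
    _ ≤ uPes F.f χ c.x * (ε ^ 3 * (uPes F.f χ c.x)⁻¹) := by gcongr
    _ = ε ^ 3 := by field_simp

theorem p_le_one (hε : 0 < ε) (hε' : ε ≤ 1) (hc : IsChart F χ ε c) : c.p ≤ 1 :=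
  calc c.p ≤ uPes F.f χ c.x * c.p := le_mul_of_one_le_left hc.2.1.le hc.one_le_uPes
    _ ≤ ε ^ 3 := hc.uPes_mul_le hε hε'
    _ ≤ 1 := pow_le_one₀ hε.le hε'

theorem overlap_self (hε : 0 ≤ ε) (hc : IsChart F χ ε c) : Overlap F χ ε c c := by
  have hp := hc.2.1
  refine ⟨?_, ?_, ?_⟩
  · rw [div_self hp.ne']
    exact exp_le_one_iff.2 (neg_nonpos.2 hε)
  · rw [div_self hp.ne']
    exact one_le_exp hε
  · rw [← chartDist, chartDist_self]
    positivity

end IsChart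

namespace Overlap

theorem symm (hO : Overlap F χ ε c₁ c₂) : Overlap F χ ε c₂ c₁ := by
  obtain ⟨hlow, hup, hdist⟩ := hO
  have hpos : 0 < c₁.p / c₂.p := (exp_pos _).trans_le hlow
  refine ⟨?_, ?_, ?_⟩
  · rw [exp_neg, ← inv_div c₁.p]
    exact inv_anti₀ hpos hup
  · rw [← inv_div c₁.p, ← neg_neg ε, exp_neg]
    exact inv_anti₀ (exp_pos _) hlow
  · rwa [← chartDist, chartDist_comm, mul_comm]

theorem uPes_mul_chartDist_le (hε : 0 < ε) (hε' : ε ≤ 1) (h₁ : IsChart F χ ε c₁)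
    (h₂ : IsChart F χ ε c₂) (hO : Overlap F χ ε c₁ c₂) :
    uPes F.f χ c₁.x * chartDist F.f χ c₁.x c₂.x ≤ ε ^ 3 * (c₁.p * c₂.p) ^ 3 := by
  have hu := h₁.uPes_pos
  have hp₁ := h₁.2.1
  have hp₂ := h₂.2.1
  calc uPes F.f χ c₁.x * chartDist F.f χ c₁.x c₂.x
      ≤ uPes F.f χ c₁.x * (c₁.p * c₂.p) ^ 4 := by
        gcongr
        exact hO.2.2.le
    _ = uPes F.f χ c₁.x * c₁.p * c₂.p * (c₁.p * c₂.p) ^ 3 := by ring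
    _ ≤ ε ^ 3 * 1 * (c₁.p * c₂.p) ^ 3 := by
        gcongr
        exacts [h₁.uPes_mul_le hε hε', h₂.p_le_one hε hε']
    _ = ε ^ 3 * (c₁.p * c₂.p) ^ 3 := by rw [mul_one]

theorem uPes_div_le_exp (hε : 0 < ε) (hε' : ε ≤ 1) (h₁ : IsChart F χ ε c₁)
    (h₂ : IsChart F χ ε c₂) (hO : Overlap F χ ε c₁ c₂) :
    uPes F.f χ c₁.x / uPes F.f χ c₂.x ≤ exp ((c₁.p * c₂.p) ^ 3) := by
  have hp₁ := h₁.2.1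
  have hp₂ := h₂.2.1
  have hsub : uPes F.f χ c₁.x / uPes F.f χ c₂.x - 1 ≤ (c₁.p * c₂.p) ^ 3 :=
    calc uPes F.f χ c₁.x / uPes F.f χ c₂.x - 1
        ≤ uPes F.f χ c₁.x * chartDist F.f χ c₁.x c₂.x :=
          (le_abs_self _).trans (abs_uPes_div_sub_one_le h₁.uPes_pos)
      _ ≤ ε ^ 3 * (c₁.p * c₂.p) ^ 3 := hO.uPes_mul_chartDist_le hε hε' h₁ h₂
      _ ≤ (c₁.p * c₂.p) ^ 3 :=
          mul_le_of_le_one_left (by positivity) (pow_le_one₀ hε.le hε')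
  linarith [add_one_le_exp ((c₁.p * c₂.p) ^ 3)]

theorem exp_le_uPes_div (hε : 0 < ε) (hε' : ε ≤ 1) (h₁ : IsChart F χ ε c₁)
    (h₂ : IsChart F χ ε c₂) (hO : Overlap F χ ε c₁ c₂) :
    exp (-((c₁.p * c₂.p) ^ 3)) ≤ uPes F.f χ c₁.x / uPes F.f χ c₂.x := by
  rw [exp_neg, ← inv_div (uPes F.f χ c₂.x), mul_comm c₁.p]
  exact inv_anti₀ (div_pos h₂.uPes_pos h₁.uPes_pos) (hO.symm.uPes_div_le_exp hε hε' h₂ h₁)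

theorem image_Psi_subset (hε : 0 < ε) (hε' : ε ≤ 1 / 2) (h₁ : IsChart F χ ε c₁)
    (h₂ : IsChart F χ ε c₂) (hO : Overlap F χ ε c₁ c₂) :
    Psi F.f χ c₁.x '' Icc (-(exp (-(2 * ε)) * c₁.p)) (exp (-(2 * ε)) * c₁.p) ⊆
      Psi F.f χ c₂.x '' Icc (-c₂.p) c₂.p := by
  have hε1 : ε ≤ 1 := by linarith
  have hp₁ := h₁.2.1
  have hp₂ := h₂.2.1
  have hprod : (c₂.p * c₁.p) ^ 3 ≤ c₂.p :=
    calc (c₂.p * c₁.p) ^ 3 ≤ c₂.p * c₁.p :=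
          pow_le_of_le_one (by positivity)
            (mul_le_one₀ (h₂.p_le_one hε hε1) hp₁.le (h₁.p_le_one hε hε1)) (by norm_num)
      _ ≤ c₂.p := mul_le_of_le_one_right hp₂.le (h₁.p_le_one hε hε1)
  have hshrink : exp (-(2 * ε)) * c₁.p ≤ exp (-ε) * c₂.p :=
    calc exp (-(2 * ε)) * c₁.p ≤ exp (-(2 * ε)) * (exp ε * c₂.p) := by
          gcongr
          exact (div_le_iff₀ hp₂).1 hO.2.1
      _ = exp (-ε) * c₂.p := by
          rw [← mul_assoc, ← exp_add]
          ring_nf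
  have hexp : exp (-ε) + ε ^ 3 ≤ 1 := by
    have hquad : exp (-ε) - 1 - -ε ≤ (-ε) ^ 2 :=
      (le_abs_self _).trans
        (abs_exp_sub_one_sub_id_le (by rwa [abs_neg, abs_of_pos hε]))
    nlinarith
  refine OneDim.image_Psi_subset h₂.uPes_pos ?_ ?_
  · exact mul_le_one₀ (exp_le_one_iff.2 (by linarith)) hp₁.le (h₁.p_le_one hε hε1)
  · calc exp (-(2 * ε)) * c₁.p + uPes F.f χ c₂.x * chartDist F.f χ c₂.x c₁.x
        ≤ exp (-ε) * c₂.p + ε ^ 3 * (c₂.p * c₁.p) ^ 3 :=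
          add_le_add hshrink (hO.symm.uPes_mul_chartDist_le hε hε1 h₂ h₁)
      _ ≤ exp (-ε) * c₂.p + ε ^ 3 * c₂.p := by gcongr
      _ = (exp (-ε) + ε ^ 3) * c₂.p := by ring
      _ ≤ c₂.p := mul_le_of_le_one_left hp₂.le hexp

theorem supNorm_transition_add_supNorm_deriv_lt (hε : 0 < ε) (hε' : ε ≤ 1 / 2)
    (h₁ : IsChart F χ ε c₁) (h₂ : IsChart F χ ε c₂) (hO : Overlap F χ ε c₁ c₂)
    {ci cj : Chart} (hi : ci = c₁ ∨ ci = c₂) (hj : cj = c₁ ∨ cj = c₂) :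
    supNorm (fun t => transition F.f χ ci.x cj.x t - t) (Icc (-1) 1) +
        supNorm (fun t => deriv (transition F.f χ ci.x cj.x) t - 1) (Icc (-1) 1) <
      ε * (c₁.p * c₂.p) ^ 3 := by
  have hε1 : ε ≤ 1 := by linarith
  have hP : 0 < (c₁.p * c₂.p) ^ 3 := pow_pos (mul_pos h₁.2.1 h₂.2.1) 3
  have hu : 0 < uPes F.f χ ci.x := by
    rcases hi with rfl | rfl
    exacts [h₁.uPes_pos, h₂.uPes_pos]
  have hdist : uPes F.f χ ci.x * chartDist F.f χ ci.x cj.x ≤ ε ^ 3 * (c₁.p * c₂.p) ^ 3 := by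
    have hself : 0 ≤ ε ^ 3 * (c₁.p * c₂.p) ^ 3 := by positivity
    rcases hi with rfl | rfl <;> rcases hj with rfl | rfl
    · rwa [chartDist_self, mul_zero]
    · exact hO.uPes_mul_chartDist_le hε hε1 h₁ h₂
    · rw [mul_comm cj.p]
      exact hO.symm.uPes_mul_chartDist_le hε hε1 h₂ h₁
    · rwa [chartDist_self, mul_zero]
  have hcube : 2 * ε ^ 3 < ε := by nlinarith [mul_pos hε hε]
  calc supNorm (fun t => transition F.f χ ci.x cj.x t - t) (Icc (-1) 1) +
        supNorm (fun t => deriv (transition F.f χ ci.x cj.x) t - 1) (Icc (-1) 1)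
      ≤ 2 * (uPes F.f χ ci.x * chartDist F.f χ ci.x cj.x) :=
        supNorm_transition_add_supNorm_deriv_le hu
    _ ≤ 2 * ε ^ 3 * (c₁.p * c₂.p) ^ 3 := by linarith
    _ < ε * (c₁.p * c₂.p) ^ 3 := by gcongr

end Overlap

end

theorem overlap_prop_general (F : GoodMap) (χ : ℝ) {ε : ℝ} (hε : 0 < ε) (hε' : ε ≤ 1 / 2)
    {c₁ c₂ : Chart} (h₁ : IsChart F χ ε c₁) (h₂ : IsChart F χ ε c₂)
    (hO : Overlap F χ ε c₁ c₂) :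
    (exp (-((c₁.p * c₂.p) ^ 3)) ≤ uPes F.f χ c₁.x / uPes F.f χ c₂.x ∧
      uPes F.f χ c₁.x / uPes F.f χ c₂.x ≤ exp ((c₁.p * c₂.p) ^ 3)) ∧
    (∀ ci cj : Chart, (ci = c₁ ∨ ci = c₂) → (cj = c₁ ∨ cj = c₂) →
      Psi F.f χ ci.x '' Icc (-(exp (-(2 * ε)) * ci.p)) (exp (-(2 * ε)) * ci.p) ⊆
        Psi F.f χ cj.x '' Icc (-cj.p) cj.p) ∧
    (∀ ci cj : Chart, (ci = c₁ ∨ ci = c₂) → (cj = c₁ ∨ cj = c₂) →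
      supNorm (fun t => transition F.f χ ci.x cj.x t - t) (Icc (-1) 1) +
          supNorm (fun t => deriv (transition F.f χ ci.x cj.x) t - 1) (Icc (-1) 1) <
        ε * (c₁.p * c₂.p) ^ 3) := by
  have hε1 : ε ≤ 1 := by linarith
  refine ⟨⟨hO.exp_le_uPes_div hε hε1 h₁ h₂, hO.uPes_div_le_exp hε hε1 h₁ h₂⟩, ?_,
    fun _ _ hi hj => hO.supNorm_transition_add_supNorm_deriv_lt hε hε' h₁ h₂ hi hj⟩
  rintro ci cj (rfl | rfl) (rfl | rfl)
  · exact (h₁.overlap_self hε.le).image_Psi_subset hε hε' h₁ h₁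
  · exact hO.image_Psi_subset hε hε' h₁ h₂
  · exact hO.symm.image_Psi_subset hε hε' h₂ h₁
  · exact (h₂.overlap_self hε.le).image_Psi_subset hε hε' h₂ h₂

/-- the overlap proposition (Proposition 2.5). -/
theorem overlap_prop (F : GoodMap) (hA : F.SatA) (χ : ℝ) (hχ : 0 < χ) :
    ∃ ε₀ > 0, ∀ ε : ℝ, 0 < ε → ε < ε₀ →
      ∀ c₁ c₂ : Chart, IsChart F χ ε c₁ → IsChart F χ ε c₂ → Overlap F χ ε c₁ c₂ →
        -- (1) control of u
        (Real.exp (-((c₁.p * c₂.p) ^ 3)) ≤ uPes F.f χ c₁.x / uPes F.f χ c₂.x ∧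
          uPes F.f χ c₁.x / uPes F.f χ c₂.x ≤ Real.exp ((c₁.p * c₂.p) ^ 3)) ∧
        -- (2) overlap of ranges
        (∀ ci cj : Chart, (ci = c₁ ∨ ci = c₂) → (cj = c₁ ∨ cj = c₂) →
          Psi F.f χ ci.x ''
              Set.Icc (-(Real.exp (-(2 * ε)) * ci.p)) (Real.exp (-(2 * ε)) * ci.p) ⊆
            Psi F.f χ cj.x '' Set.Icc (-cj.p) cj.p) ∧
        -- (3) change of coordinates
        (∀ ci cj : Chart, (ci = c₁ ∨ ci = c₂) → (cj = c₁ ∨ cj = c₂) →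
          supNorm (fun t => uPes F.f χ ci.x * (Psi F.f χ cj.x t - ci.x 0) - t)
              (Set.Icc (-1) 1) +
            supNorm
              (fun t => deriv (fun s => uPes F.f χ ci.x * (Psi F.f χ cj.x s - ci.x 0)) t - 1)
              (Set.Icc (-1) 1) < ε * (c₁.p * c₂.p) ^ 3) :=
  ⟨1 / 2, by norm_num, fun _ hε hε' _ _ h₁ h₂ hO =>
    overlap_prop_general F χ hε hε'.le h₁ h₂ hO⟩

end OneDim
end
end
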